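/- Let d ≥ 5, n ≥ 4 and a, b > 1, and let E_0, E_1 be (a,b) separated DOT clusterings of n-element configurations in Z^d. If a ≥ e^{max{100b, 10d²}}, then Pairs(E_0,E_1) = {(x,y) : (clust(E_0,x), x, y) ∈ Triples(E_0,E_1)} and Triples(E_0,E_1) = {(clust(E_0,x), x, y) : (x,y) ∈ Pairs(E_0,E_1)}, where clust(E_0,x) denotes the index of the cluster of E_0 containing x. -/

import Mathlib

open MeasureTheory

namespace HATFormal

/-- Points of the lattice `ℤ^d`. -/
abbrev Pt (d : ℕ) := Fin d → ℤ

/-- The `2d` unit steps of the simple random walk on `ℤ^d`. -/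
def Dir (d : ℕ) : Set (Pt d) :=
  {s | ∃ i : Fin d, s = Pi.single i 1 ∨ s = Pi.single i (-1)}

/-- The position, after `t` steps, of the walk started at `x` with steps `s`. -/
def wpos (d : ℕ) (x : Pt d) {T : ℕ} (s : Fin T → Pt d) (t : ℕ) : Pt d :=
  x + ∑ i ∈ Finset.univ.filter (fun i : Fin T => (i : ℕ) < t), s i

/-- The probability of an event `P` of the first `T` steps of simple random walk on `ℤ^d`. -/
noncomputable def prob (d T : ℕ) (P : (Fin T → Pt d) → Prop) : ℝ :=
  (Nat.card {s : Fin T → Pt d // (∀ i, s i ∈ Dir d) ∧ P s} : ℝ) / ((2 * d : ℕ) : ℝ) ^ T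

open Classical in
/-- `esc d A x = P_x(τ_A = ∞)` if `x ∈ A`, and `0` otherwise. -/
noncomputable def esc (d : ℕ) (A : Set (Pt d)) (x : Pt d) : ℝ :=
  if x ∈ A then ⨅ T : ℕ, prob d T (fun s => ∀ t, 1 ≤ t → t ≤ T → wpos d x s t ∉ A) else 0

/-- The capacity of `A`. -/
noncomputable def capa (d : ℕ) (A : Set (Pt d)) : ℝ := ∑' x : A, esc d A (x : Pt d)

/-- The harmonic measure `H_A(x) = esc_A(x) / cap_A`. -/
noncomputable def harm (d : ℕ) (A : Set (Pt d)) (x : Pt d) : ℝ := esc d A x / capa d A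

/-- `P_x(τ_W < ∞)`. -/
noncomputable def retProb (d : ℕ) (W : Set (Pt d)) (x : Pt d) : ℝ :=
  ∑' t : ℕ, prob d t (fun s => 1 ≤ t ∧ wpos d x s t ∈ W ∧
    ∀ u, 1 ≤ u → u < t → wpos d x s u ∉ W)

/-- `P_x(τ_W < ∞ and S_{τ_W − 1} = y)`. -/
noncomputable def hitFrom (d : ℕ) (W : Set (Pt d)) (x y : Pt d) : ℝ :=
  ∑' t : ℕ, prob d t (fun s => 1 ≤ t ∧ wpos d x s t ∈ W ∧ wpos d x s (t - 1) = y ∧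
    ∀ u, 1 ≤ u → u < t → wpos d x s u ∉ W)

/-- `P_x(τ_W < ∞ and S_{τ_W} ∈ T)`. -/
noncomputable def firstHitIn (d : ℕ) (W T : Set (Pt d)) (x : Pt d) : ℝ :=
  ∑' t : ℕ, prob d t (fun s => 1 ≤ t ∧ wpos d x s t ∈ W ∧ wpos d x s t ∈ T ∧
    ∀ u, 1 ≤ u → u < t → wpos d x s u ∉ W)

/-- `P_x(S_{τ_W − 1} = y ∣ τ_W < ∞)`. -/
noncomputable def transP (d : ℕ) (W : Set (Pt d)) (x y : Pt d) : ℝ :=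
  hitFrom d W x y / retProb d W x

/-- The Green's function of simple random walk on `ℤ^d`. -/
noncomputable def green (d : ℕ) (x : Pt d) : ℝ :=
  ∑' t : ℕ, prob d t (fun s => wpos d x s t = 0)

/-- Configurations: finite subsets of `ℤ^d`. -/
abbrev Conf (d : ℕ) := Finset (Pt d)

/-- `p_U(x, y)`, the probability that HAT activates at `x` and transports to `y`. -/
noncomputable def pHAT (d : ℕ) (U : Conf d) (x y : Pt d) : ℝ :=
  harm d (↑U) x * transP d ((↑U : Set (Pt d)) \ {x}) x y

open Classical in
/-- The transition probabilities of HAT. -/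
noncomputable def hatProb (d : ℕ) (U V : Conf d) : ℝ :=
  if V = U then ∑' z : Pt d, pHAT d U z z
  else ∑' x : Pt d, ∑' y : Pt d,
    if x ∈ U ∧ x ≠ y ∧ V = insert y (U.erase x) then pHAT d U x y else 0

instance (d : ℕ) : MeasurableSpace (Conf d) := ⊤

/-- `μ` is the law of HAT started from `U`. -/
def IsHATLaw (d : ℕ) (U : Conf d) (μ : Measure (ℕ → Conf d)) : Prop :=
  IsProbabilityMeasure μ ∧
  ∀ (t : ℕ) (u : ℕ → Conf d),
    μ {ω | ∀ s ≤ t, ω s = u s} =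
      (if u 0 = U then 1 else 0) *
        ∏ s ∈ Finset.range t, ENNReal.ofReal (hatProb d (u s) (u (s + 1)))

/-- A signed permutation plus translation of `ℤ^d`. -/
def SymImage (d : ℕ) (σ : Equiv.Perm (Fin d)) (ε : Fin d → ℤ) (v : Pt d) (x : Pt d) : Pt d :=
  fun i => v i + ε i * x (σ i)

/-- `SymEq d U V` holds when `V = gU` for a symmetry `g` of `ℤ^d`. -/
def SymEq (d : ℕ) (U V : Conf d) : Prop :=
  ∃ (σ : Equiv.Perm (Fin d)) (ε : Fin d → ℤ) (v : Pt d),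
    (∀ i, ε i = 1 ∨ ε i = -1) ∧ V = U.image (SymImage d σ ε v)

/-- Euclidean distance on `ℤ^d`. -/
noncomputable def dist0 (d : ℕ) (x y : Pt d) : ℝ :=
  Real.sqrt (∑ i, ((x i : ℝ) - (y i : ℝ)) ^ 2)

/-- Euclidean distance between finite subsets of `ℤ^d`. -/
noncomputable def setDist (d : ℕ) (A B : Finset (Pt d)) : ℝ :=
  sInf {r : ℝ | ∃ x ∈ A, ∃ y ∈ B, r = dist0 d x y}

/-- Euclidean diameter of a finite subset of `ℤ^d`. -/
noncomputable def diam0 (d : ℕ) (A : Finset (Pt d)) : ℝ :=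
  sSup {r : ℝ | ∃ x ∈ A, ∃ y ∈ A, r = dist0 d x y}

/-- Lattice (nearest-neighbor) adjacency in `ℤ^d`. -/
def latAdj (d : ℕ) (x y : Pt d) : Prop := (∑ i, (x i - y i).natAbs) = 1

/-- Exterior lattice boundary of a set. -/
def bdry (d : ℕ) (A : Set (Pt d)) : Set (Pt d) := {z | z ∉ A ∧ ∃ w ∈ A, latAdj d z w}

/-- Non-isolated configurations: some exposed element has a lattice neighbor in the set. -/
def NonIso (d : ℕ) (U : Conf d) : Prop :=
  ∃ x ∈ U, 0 < esc d (↑U) x ∧ ∃ y ∈ U, latAdj d x y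

/-- `C` is a clustering (ordered partition into nonempty clusters) of `U`. -/
def IsClusteringOf (d : ℕ) {k : ℕ} (C : Fin k → Finset (Pt d)) (U : Finset (Pt d)) : Prop :=
  (∀ i, (C i).Nonempty) ∧ (∀ i j, i ≠ j → Disjoint (C i) (C j)) ∧
    Finset.univ.biUnion C = U

/-- `C^{≠ i}`, the union of the clusters other than `i`. -/
def others (d : ℕ) {k : ℕ} (C : Fin k → Finset (Pt d)) (i : Fin k) : Finset (Pt d) :=
  Finset.univ.biUnion fun j => if j = i then ∅ else C j

/-- The separation of a clustering. -/
noncomputable def sep (d : ℕ) {k : ℕ} (C : Fin k → Finset (Pt d)) : ℝ :=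
  ⨅ i, setDist d (C i) (others d C i)

/-- `(a, b)` separated dimer-or-trimer (DOT) clusterings. -/
def IsDOT (d : ℕ) {k : ℕ} (C : Fin k → Finset (Pt d)) (a b : ℝ) : Prop :=
  (∀ i, (C i).card = 2 ∨ (C i).card = 3) ∧ a ≤ sep d C ∧
    ∀ i, diam0 d (C i) ≤ b * Real.log (setDist d (C i) (others d C i))

/-- Clusterings with an unspecified number of clusters. -/
abbrev ClusteringS (d : ℕ) := Σ k : ℕ, Fin k → Finset (Pt d)

/-- `π(C)`, the union of the clusters of `C`. -/
def confOf (d : ℕ) (C : ClusteringS d) : Conf d := Finset.univ.biUnion C.2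

/-- `C ∈ 𝒞(U, a, b)`. -/
def InC (d : ℕ) (U : Conf d) (a b : ℝ) (C : ClusteringS d) : Prop :=
  IsClusteringOf d C.2 U ∧ IsDOT d C.2 a b

/-- `U ∈ 𝒰_{d,n}(a, b)`. -/
def InU (d n : ℕ) (a b : ℝ) (U : Conf d) : Prop :=
  U.card = n ∧ ∃ C : ClusteringS d, InC d U a b C

/-- `C` is a clustering of an `n`-element configuration. -/
def IsClusteringConf (d n : ℕ) (C : ClusteringS d) : Prop :=
  (∀ i, (C.2 i).Nonempty) ∧ (∀ i j, i ≠ j → Disjoint (C.2 i) (C.2 j)) ∧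
    (confOf d C).card = n

open Classical in
/-- One step of the natural clustering. -/
noncomputable def clustStep (d : ℕ) (Ut Ut1 : Conf d) (C : ClusteringS d) : ClusteringS d :=
  if Ut1 = Ut then C
  else if h : ∃ p : Pt d × Pt d × Fin C.1,
      Ut \ Ut1 = {p.1} ∧ Ut1 \ Ut = {p.2.1} ∧ p.1 ∈ C.2 p.2.2 then
    ⟨C.1, Function.update C.2 h.choose.2.2
      (insert h.choose.2.1 ((C.2 h.choose.2.2).erase h.choose.1))⟩
  else ⟨1, fun _ => Ut1⟩

/-- The natural clustering of the trajectory `ω` with initial clustering `C0`. -/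
noncomputable def natClust (d : ℕ) (ω : ℕ → Conf d) (C0 : ClusteringS d) : ℕ → ClusteringS d
  | 0 => C0
  | t + 1 => clustStep d (ω t) (ω (t + 1)) (natClust d ω C0 t)

/-- `a_s = s^{1/2 − n^{−100}} + 100 n`. -/
noncomputable def aSep (n s : ℕ) : ℝ :=
  (s : ℝ) ^ ((1 : ℝ) / 2 - (n : ℝ) ^ (-(100 : ℝ))) + 100 * n

/-- `C^{i, x, y}`: remove `x` from cluster `i` of `C` and add `y` to that cluster. -/
def updC (d : ℕ) (C : ClusteringS d) (i : Fin C.1) (x y : Pt d) : ClusteringS d :=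
  ⟨C.1, Function.update C.2 i (insert y ((C.2 i).erase x))⟩

open Classical in
/-- The transition probabilities of the lifting of HAT to clusterings. -/
noncomputable def liftProb (d : ℕ) (E0 E1 : ClusteringS d) : ℝ :=
  ∑' x : Pt d, ∑' y : Pt d,
    if ∃ i : Fin E0.1, x ∈ E0.2 i ∧ E1 = updC d E0 i x y
    then pHAT d (confOf d E0) x y else 0

/-- The capacity of a clustering: the sum of the capacities of its clusters. -/
noncomputable def capS (d : ℕ) (C : ClusteringS d) : ℝ := ∑ i, capa d (↑(C.2 i))

/-- `H_C(i, x) = esc_{C^i}(x) / cap_C`. -/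
noncomputable def harmS (d : ℕ) (C : ClusteringS d) (i : Fin C.1) (x : Pt d) : ℝ :=
  esc d (↑(C.2 i)) x / capS d C

/-- `q_C(i, x, y)`. -/
noncomputable def qIHAT (d : ℕ) (C : ClusteringS d) (i : Fin C.1) (x y : Pt d) : ℝ :=
  harmS d C i x * transP d ((↑(C.2 i) : Set (Pt d)) \ {x}) x y

open Classical in
/-- The transition probabilities of intracluster HAT (IHAT). -/
noncomputable def ihatProb (d : ℕ) (D E : ClusteringS d) : ℝ :=
  ∑' x : Pt d, ∑' y : Pt d, ∑ i : Fin D.1,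
    if x ∈ D.2 i ∧ E = updC d D i x y then qIHAT d D i x y else 0

instance (d : ℕ) : MeasurableSpace (ClusteringS d) := ⊤

open Classical in
/-- `μ` is the law of the lifted HAT chain started from `E0`. -/
def IsLiftLaw (d : ℕ) (E0 : ClusteringS d) (μ : Measure (ℕ → ClusteringS d)) : Prop :=
  IsProbabilityMeasure μ ∧
  ∀ (t : ℕ) (u : ℕ → ClusteringS d),
    μ {ω | ∀ s ≤ t, ω s = u s} =
      (if u 0 = E0 then 1 else 0) *
        ∏ s ∈ Finset.range t, ENNReal.ofReal (liftProb d (u s) (u (s + 1)))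

open Classical in
/-- `μ` is the law of intracluster HAT started from `D0`. -/
def IsIHATLaw (d : ℕ) (D0 : ClusteringS d) (μ : Measure (ℕ → ClusteringS d)) : Prop :=
  IsProbabilityMeasure μ ∧
  ∀ (t : ℕ) (u : ℕ → ClusteringS d),
    μ {ω | ∀ s ≤ t, ω s = u s} =
      (if u 0 = D0 then 1 else 0) *
        ∏ s ∈ Finset.range t, ENNReal.ofReal (ihatProb d (u s) (u (s + 1)))

/-- `Pairs(E0, E1)`. -/
def Pairs (d : ℕ) (E0 E1 : ClusteringS d) : Set (Pt d × Pt d) :=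
  {p | 0 < pHAT d (confOf d E0) p.1 p.2 ∧
    ∃ i : Fin E0.1, p.1 ∈ E0.2 i ∧ E1 = updC d E0 i p.1 p.2}

/-- `Triples(E0, E1)`. -/
def Triples (d : ℕ) (E0 E1 : ClusteringS d) : Set (Fin E0.1 × Pt d × Pt d) :=
  {q | 0 < qIHAT d E0 q.1 q.2.1 q.2.2 ∧ E1 = updC d E0 q.1 q.2.1 q.2.2}

/-- The first standard basis vector of `ℤ^d`. -/
def e1v (d : ℕ) : Pt d := fun i => if (i : ℕ) = 0 then 1 else 0

/-- Reference dimers and trimers. -/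
def Ref (d : ℕ) : Set (Finset (Pt d)) :=
  {A | ∃ x : Pt d, A = {x, x + e1v d} ∨ A = {x, x + e1v d, x + e1v d + e1v d}}

/-- *-adjacency in `ℤ^d`: distinct points differing by at most one in each coordinate. -/
def starAdj (d : ℕ) (x y : Pt d) : Prop := x ≠ y ∧ ∀ i, (x i - y i).natAbs ≤ 1

/-- The *-visible boundary of `A`. -/
def visBdry (d : ℕ) (A : Finset (Pt d)) : Set (Pt d) :=
  {x | (∃ y ∈ A, starAdj d x y) ∧
    ∃ γ : ℕ → Pt d, γ 0 = x ∧ (∀ t, latAdj d (γ t) (γ (t + 1))) ∧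
      (∀ t, γ t ∉ A) ∧ ∀ r : ℝ, ∃ t, r < dist0 d (γ t) 0}

/-- `A` is connected in the nearest-neighbor graph of `ℤ^d`. -/
def LatConnected (d : ℕ) (A : Finset (Pt d)) : Prop :=
  ∀ x ∈ A, ∀ y ∈ A, ∃ (L : ℕ) (γ : ℕ → Pt d), γ 0 = x ∧ γ L = y ∧
    (∀ t < L, latAdj d (γ t) (γ (t + 1))) ∧ ∀ t ≤ L, γ t ∈ A

/-- Strict lexicographic order on `ℤ^d`. -/
def lexLt (d : ℕ) (x y : Pt d) : Prop :=
  ∃ i : Fin d, (∀ j, j < i → x j = y j) ∧ x i < y i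

/-- `x` is the lex (least) element of `A`. -/
def IsLex (d : ℕ) (A : Finset (Pt d)) (x : Pt d) : Prop :=
  x ∈ A ∧ ∀ y ∈ A, y ≠ x → lexLt d x y

/-- The unit steps, parametrised. -/
def dv (d : ℕ) (p : Fin d × Bool) : Pt d := Pi.single p.1 (if p.2 then 1 else -1)

lemma dv_mem (d : ℕ) (p : Fin d × Bool) : dv d p ∈ Dir d := by
  rcases p with ⟨i, b⟩
  refine ⟨i, ?_⟩
  cases b <;> simp [dv]

lemma mem_Dir_iff (d : ℕ) (s : Pt d) : s ∈ Dir d ↔ ∃ p, dv d p = s := by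
  constructor
  · rintro ⟨i, h | h⟩
    · exact ⟨(i, true), by simp [dv, h]⟩
    · exact ⟨(i, false), by simp [dv, h]⟩
  · rintro ⟨p, rfl⟩
    exact dv_mem d p

lemma dv_inj (d : ℕ) : Function.Injective (dv d) := by
  rintro ⟨i, b⟩ ⟨j, c⟩ h
  have hi := congrFun h i
  have hj : i = j := by
    by_contra hne
    simp only [dv, Pi.single_eq_same, Pi.single_eq_of_ne hne] at hi
    cases b <;> simp at hi
  subst hj
  simp only [dv, Pi.single_eq_same] at hi
  cases b <;> cases c <;> simp at hi ⊢

lemma finite_Dir (d : ℕ) : (Dir d).Finite := by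
  have : Dir d = Set.range (dv d) := by
    ext s; rw [mem_Dir_iff]; rfl
  rw [this]; exact Set.finite_range _

instance finite_paths (d T : ℕ) (P : (Fin T → Pt d) → Prop) :
    Finite {s : Fin T → Pt d // (∀ i, s i ∈ Dir d) ∧ P s} := by
  have h : (Set.univ.pi (fun _ : Fin T => Dir d)).Finite :=
    Set.Finite.pi (fun _ => finite_Dir d)
  exact (h.subset (t := {s | (∀ i, s i ∈ Dir d) ∧ P s})
    (fun s hs i _ => hs.1 i)).to_subtype

lemma prob_nonneg (d T : ℕ) (P : (Fin T → Pt d) → Prop) : 0 ≤ prob d T P := by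
  unfold prob; positivity

lemma prob_mono (d T : ℕ) {P Q : (Fin T → Pt d) → Prop} (h : ∀ s, P s → Q s) :
    prob d T P ≤ prob d T Q := by
  unfold prob
  gcongr
  exact Nat.card_le_card_of_injective
    (fun s => (⟨s.1, s.2.1, h _ s.2.2⟩ : {s : Fin T → Pt d // (∀ i, s i ∈ Dir d) ∧ Q s}))
    (fun a b hab => by
      have := congrArg Subtype.val hab
      exact Subtype.ext this)

lemma prob_congr (d T : ℕ) {P Q : (Fin T → Pt d) → Prop} (h : ∀ s, P s ↔ Q s) :
    prob d T P = prob d T Q :=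
  le_antisymm (prob_mono d T fun s => (h s).1) (prob_mono d T fun s => (h s).2)

lemma prob_false (d T : ℕ) {P : (Fin T → Pt d) → Prop} (h : ∀ s, ¬ P s) :
    prob d T P = 0 := by
  unfold prob
  have : IsEmpty {s : Fin T → Pt d // (∀ i, s i ∈ Dir d) ∧ P s} := ⟨fun s => h _ s.2.2⟩
  simp

lemma prob_zero (d : ℕ) {P : (Fin 0 → Pt d) → Prop} (h : ∀ s, P s) :
    prob d 0 P = 1 := by
  unfold prob
  have : Unique {s : Fin 0 → Pt d // (∀ i, s i ∈ Dir d) ∧ P s} :=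
    { default := ⟨fun i => i.elim0, fun i => i.elim0, h _⟩
      uniq := fun s => Subtype.ext (Subsingleton.elim _ _) }
  rw [Nat.card_unique]
  simp

lemma prob_succ (d T : ℕ) (P : (Fin (T + 1) → Pt d) → Prop) :
    prob d (T + 1) P =
      (∑ p : Fin d × Bool, prob d T (fun s => P (Fin.cons (dv d p) s))) / ((2 * d : ℕ) : ℝ) := by
  have key : Nat.card {s : Fin (T + 1) → Pt d // (∀ i, s i ∈ Dir d) ∧ P s} =
      ∑ p : Fin d × Bool, Nat.card {s : Fin T → Pt d // (∀ i, s i ∈ Dir d) ∧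
        P (Fin.cons (dv d p) s)} := by
    rw [← Nat.card_sigma]
    symm
    apply Nat.card_congr
    refine Equiv.ofBijective (fun q => ⟨Fin.cons (dv d q.1) q.2.1, ?_, q.2.2.2⟩) ⟨?_, ?_⟩
    · intro i
      refine Fin.cases ?_ (fun j => ?_) i
      · simpa using dv_mem d q.1
      · simpa using q.2.2.1 j
    · rintro ⟨p, s, hs⟩ ⟨p', s', hs'⟩ h
      have h1 := congrArg Subtype.val h
      simp only at h1
      have h2 := Fin.cons_injective2 h1
      obtain ⟨h3, h4⟩ := h2
      have := dv_inj d h3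
      subst this
      subst h4
      rfl
    · rintro ⟨s, hs, hP⟩
      obtain ⟨p, hp⟩ := (mem_Dir_iff d _).1 (hs 0)
      refine ⟨⟨p, Fin.tail s, fun i => hs i.succ, ?_⟩, ?_⟩
      · rw [hp, Fin.cons_self_tail]; exact hP
      · apply Subtype.ext
        simp only
        rw [hp, Fin.cons_self_tail]
  unfold prob
  rw [key, ← Finset.sum_div, div_div, pow_succ]
  push_cast
  rfl

lemma wpos_zero (d : ℕ) (x : Pt d) {T : ℕ} (s : Fin T → Pt d) : wpos d x s 0 = x := by
  simp [wpos]

lemma wpos_cons (d : ℕ) (x v : Pt d) {T : ℕ} (s : Fin T → Pt d) (t : ℕ) :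
    wpos d x (Fin.cons v s : Fin (T + 1) → Pt d) (t + 1) = wpos d (x + v) s t := by
  simp only [wpos, Finset.sum_filter]
  rw [Fin.sum_univ_succ]
  simp [add_assoc]

/-- Probability of avoiding `A` during times `1..T`. -/
noncomputable def avoid (d : ℕ) (A : Set (Pt d)) (T : ℕ) (x : Pt d) : ℝ :=
  prob d T (fun s => ∀ t, 1 ≤ t → t ≤ T → wpos d x s t ∉ A)

lemma avoid_zero (d : ℕ) (A : Set (Pt d)) (x : Pt d) : avoid d A 0 x = 1 :=
  prob_zero d (fun s t h1 h2 => by omega)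

open Classical in
lemma avoid_succ (d : ℕ) (A : Set (Pt d)) (T : ℕ) (x : Pt d) :
    avoid d A (T + 1) x =
      (∑ p : Fin d × Bool, if x + dv d p ∈ A then 0 else avoid d A T (x + dv d p))
        / ((2 * d : ℕ) : ℝ) := by
  unfold avoid
  rw [prob_succ]
  congr 1
  refine Finset.sum_congr rfl fun p _ => ?_
  split_ifs with h
  · apply prob_false
    intro s hs
    apply hs 1 le_rfl (by omega)
    rw [wpos_cons d x (dv d p) s 0, wpos_zero]
    exact h
  · apply prob_congr
    intro s
    constructor
    · intro hs t h1 h2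
      have := hs (t + 1) (by omega) (by omega)
      rwa [wpos_cons] at this
    · intro hs t h1 h2
      obtain ⟨u, rfl⟩ : ∃ u, t = u + 1 := ⟨t - 1, by omega⟩
      rw [wpos_cons]
      rcases Nat.eq_zero_or_pos u with rfl | hu
      · rw [wpos_zero]; exact h
      · exact hs u hu (by omega)

/-- Squared norm. -/
def nsq (d : ℕ) (x : Pt d) : ℝ := ∑ i, (x i : ℝ) ^ 2

/-- A positive superharmonic function. -/
noncomputable def gg (d : ℕ) (x : Pt d) : ℝ := 1 / (nsq d x + 20)

lemma nsq_nonneg (d : ℕ) (x : Pt d) : 0 ≤ nsq d x :=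
  Finset.sum_nonneg fun _ _ => sq_nonneg _

lemma nsq_add_single (d : ℕ) (x : Pt d) (i : Fin d) (c : ℤ) :
    nsq d (x + Pi.single i c) = nsq d x + 2 * c * x i + c ^ 2 := by
  unfold nsq
  rw [← Finset.add_sum_erase _ _ (Finset.mem_univ i),
    ← Finset.add_sum_erase (a := i) (f := fun j => (x j : ℝ) ^ 2) _ (Finset.mem_univ i)]
  have : ∑ j ∈ Finset.univ.erase i, (((x + Pi.single i c : Pt d) j : ℤ) : ℝ) ^ 2 =
      ∑ j ∈ Finset.univ.erase i, ((x j : ℤ) : ℝ) ^ 2 := by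
    refine Finset.sum_congr rfl fun j hj => ?_
    simp [Finset.ne_of_mem_erase hj]
  rw [this]
  simp
  ring

lemma aux_pair (R X : ℝ) (hR : 21 ≤ R) (hX : X ^ 2 ≤ R) :
    1 / (R + 2 * X) + 1 / (R - 2 * X) ≤ 2 / R + 10 * X ^ 2 / R ^ 3 := by
  have h4 : 20 * X ^ 2 ≤ R ^ 2 := by nlinarith
  have hpos : 0 < R ^ 2 - 4 * X ^ 2 := by nlinarith
  have h1 : 0 < R + 2 * X := by nlinarith [sq_nonneg (X + 1), sq_nonneg X]
  have h2 : 0 < R - 2 * X := by nlinarith [sq_nonneg (X - 1), sq_nonneg X]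
  have e1 : 1 / (R + 2 * X) + 1 / (R - 2 * X) = 2 * R / ((R + 2 * X) * (R - 2 * X)) := by
    field_simp; ring
  have e2 : 2 / R + 10 * X ^ 2 / R ^ 3 = (2 * R ^ 2 + 10 * X ^ 2) / R ^ 3 := by
    field_simp
  rw [e1, e2, div_le_div_iff₀ (by positivity) (by positivity)]
  have : 0 ≤ X ^ 2 * (R ^ 2 - 20 * X ^ 2) := mul_nonneg (sq_nonneg _) (by linarith)
  nlinarith

lemma gg_super (d : ℕ) (hd : 5 ≤ d) (x : Pt d) :
    (∑ p : Fin d × Bool, gg d (x + dv d p)) / ((2 * d : ℕ) : ℝ) ≤ gg d x := by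
  have hd' : (5 : ℝ) ≤ d := by exact_mod_cast hd
  set R := nsq d x + 21 with hR
  have hR21 : 21 ≤ R := by have := nsq_nonneg d x; linarith
  have hRpos : 0 < R := by linarith
  have hX : ∀ i, (x i : ℝ) ^ 2 ≤ nsq d x := fun i =>
    Finset.single_le_sum (f := fun j => (x j : ℝ) ^ 2) (fun _ _ => sq_nonneg _)
      (Finset.mem_univ i)
  have hsum : (∑ p : Fin d × Bool, gg d (x + dv d p)) ≤ 2 * d / R + 10 * nsq d x / R ^ 3 := by
    rw [Fintype.sum_prod_type]
    calc _ ≤ ∑ i : Fin d, (2 / R + 10 * (x i : ℝ) ^ 2 / R ^ 3) := by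
          refine Finset.sum_le_sum fun i _ => ?_
          have := aux_pair R (x i) hR21 (by linarith [hX i])
          refine le_trans (le_of_eq ?_) this
          have e1 : nsq d (x + dv d (i, true)) + 20 = R + 2 * x i := by
            rw [dv, nsq_add_single]
            simp [hR]; ring
          have e2 : nsq d (x + dv d (i, false)) + 20 = R - 2 * x i := by
            rw [dv, nsq_add_single]
            simp [hR]; ring
          rw [Fintype.sum_bool, gg, gg, e1, e2]
      _ = _ := by
          rw [Finset.sum_add_distrib, ← Finset.sum_div, ← Finset.sum_div, ← Finset.mul_sum]
          simp [nsq]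
          ring
  have h2 : 2 * d / R + 10 * nsq d x / R ^ 3 ≤ (2 * d) / (R - 1) := by
    have hn : nsq d x ≤ R := by linarith
    have h3 : 10 * nsq d x / R ^ 3 ≤ 2 * d / R ^ 2 := by
      rw [div_le_div_iff₀ (by positivity) (by positivity)]
      have : 0 ≤ R ^ 2 * (2 * d * R - 10 * nsq d x) := by
        apply mul_nonneg (by positivity)
        nlinarith
      nlinarith
    have h4 : 2 * (d : ℝ) / R + 2 * d / R ^ 2 ≤ (2 * d) / (R - 1) := by
      have e : 2 * (d : ℝ) / R + 2 * d / R ^ 2 = 2 * d * (R + 1) / R ^ 2 := by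
        field_simp
      rw [e, div_le_div_iff₀ (by positivity) (by linarith)]
      nlinarith
    linarith
  have h5 : gg d x = 1 / (R - 1) := by
    unfold gg; congr 1; rw [hR]; ring
  rw [h5, div_le_iff₀ (by push_cast; linarith)]
  refine (hsum.trans h2).trans (le_of_eq ?_)
  push_cast; ring

lemma gg_nonneg (d : ℕ) (x : Pt d) : 0 ≤ gg d x := by
  have := nsq_nonneg d x
  unfold gg; positivity

lemma card_dirs (d : ℕ) : ∑ _p : Fin d × Bool, (1 : ℝ) = ((2 * d : ℕ) : ℝ) := by
  simp; ring

lemma avoid_nonneg (d : ℕ) (A : Set (Pt d)) (T : ℕ) (x : Pt d) : 0 ≤ avoid d A T x :=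
  prob_nonneg _ _ _

lemma avoid_ge (d : ℕ) (hd : 5 ≤ d) (A : Set (Pt d)) (K : ℝ) (hK : 0 ≤ K)
    (hA : ∀ z ∈ A, 1 ≤ K * gg d z) (T : ℕ) :
    ∀ x, 1 - K * gg d x ≤ avoid d A T x := by
  induction T with
  | zero =>
    intro x
    rw [avoid_zero]
    have := mul_nonneg hK (gg_nonneg d x)
    linarith
  | succ T ih =>
    intro x
    have hpos : (0 : ℝ) < ((2 * d : ℕ) : ℝ) := by
      have : 0 < 2 * d := by omega
      exact_mod_cast this
    rw [avoid_succ]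
    have h1 : ∑ p : Fin d × Bool, (1 - K * gg d (x + dv d p)) ≤
        ∑ p : Fin d × Bool, (open Classical in
          if x + dv d p ∈ A then 0 else avoid d A T (x + dv d p)) := by
      refine Finset.sum_le_sum fun p _ => ?_
      split_ifs with h
      · linarith [hA _ h]
      · exact ih _
    rw [Finset.sum_sub_distrib, ← Finset.mul_sum, card_dirs] at h1
    rw [le_div_iff₀ hpos]
    refine le_trans ?_ h1
    have := gg_super d hd x
    rw [div_le_iff₀ hpos] at this
    nlinarith [mul_le_mul_of_nonneg_left this hK]

/-- Uniformly positive avoidance probability. -/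
def Esc (d : ℕ) (A : Set (Pt d)) (x : Pt d) : Prop := ∃ c : ℝ, 0 < c ∧ ∀ T, c ≤ avoid d A T x

lemma Esc_step (d : ℕ) (A : Set (Pt d)) (x : Pt d) (p : Fin d × Bool)
    (h : x + dv d p ∉ A) (hE : Esc d A (x + dv d p)) : Esc d A x := by
  obtain ⟨c, hc, hT⟩ := hE
  have hd : 0 < d := p.1.pos
  have hpos : (0 : ℝ) < ((2 * d : ℕ) : ℝ) := by
    have : 0 < 2 * d := by omega
    exact_mod_cast this
  refine ⟨min 1 (c / ((2 * d : ℕ) : ℝ)), by positivity, fun T => ?_⟩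
  cases T with
  | zero => rw [avoid_zero]; exact min_le_left _ _
  | succ T =>
    refine (min_le_right _ _).trans ?_
    rw [avoid_succ]
    gcongr
    have := Finset.single_le_sum (s := Finset.univ) (f := fun p : Fin d × Bool =>
      (open Classical in if x + dv d p ∈ A then 0 else avoid d A T (x + dv d p)))
      (fun q _ => by
        split_ifs
        · exact le_rfl
        · exact avoid_nonneg _ _ _ _) (Finset.mem_univ p)
    simp only [if_neg h] at this
    exact (hT T).trans this

/-- Sum of coordinates. -/
def csum (d : ℕ) (x : Pt d) : ℤ := ∑ i, x i

lemma csum_up (d : ℕ) (x : Pt d) (i : Fin d) : csum d (x + dv d (i, true)) = csum d x + 1 := by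
  simp [csum, dv, Finset.sum_add_distrib]

lemma csum_le_nsq (d : ℕ) (x : Pt d) : (csum d x : ℝ) ≤ nsq d x := by
  unfold csum nsq
  push_cast
  refine Finset.sum_le_sum fun i _ => ?_
  have : x i ≤ x i ^ 2 := by
    rcases le_or_gt (x i) 0 with h | h
    · nlinarith [sq_nonneg (x i)]
    · nlinarith
  exact_mod_cast this

/-- From every point one can step upwards outside `A`. -/
def Up (d : ℕ) (A : Set (Pt d)) : Prop := ∀ z, ∃ i : Fin d, z + dv d (i, true) ∉ A

lemma Esc_all (d : ℕ) (hd : 5 ≤ d) (A : Set (Pt d)) (hfin : A.Finite) (hup : Up d A) :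
    ∀ x, Esc d A x := by
  obtain ⟨M, hM⟩ : ∃ M : ℝ, ∀ z ∈ A, nsq d z + 20 ≤ M := by
    obtain ⟨M, hM⟩ := (hfin.image (fun z => nsq d z + 20)).bddAbove
    exact ⟨M, fun z hz => hM ⟨z, hz, rfl⟩⟩
  set K := max M 0 with hKdef
  have hK : 0 ≤ K := le_max_right _ _
  have hA : ∀ z ∈ A, 1 ≤ K * gg d z := by
    intro z hz
    have h1 := hM z hz
    have h2 := nsq_nonneg d z
    have h3 : M ≤ K := le_max_left _ _
    unfold gg
    rw [mul_one_div, le_div_iff₀ (by linarith)]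
    linarith
  obtain ⟨N, hN⟩ := exists_nat_ge (2 * K)
  have main : ∀ m : ℕ, ∀ x, (N : ℤ) - csum d x ≤ m → Esc d A x := by
    intro m
    induction m with
    | zero =>
      intro x hx
      refine ⟨1 / 2, by norm_num, fun T => ?_⟩
      refine le_trans ?_ (avoid_ge d hd A K hK hA T x)
      have h1 : (N : ℝ) ≤ csum d x := by
        have : (N : ℤ) ≤ csum d x := by simpa using hx
        exact_mod_cast this
      have h2 := csum_le_nsq d x
      have h3 : K * gg d x ≤ 1 / 2 := by
        unfold gg
        have := nsq_nonneg d x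
        rw [mul_one_div, div_le_iff₀ (by linarith)]
        linarith
      linarith
    | succ m ih =>
      intro x hx
      obtain ⟨i, hi⟩ := hup x
      refine Esc_step d A x (i, true) hi (ih _ ?_)
      rw [csum_up]
      push_cast at hx
      linarith
  intro x
  exact main ((N : ℤ) - csum d x).toNat x (Int.self_le_toNat _)

lemma esc_nonneg (d : ℕ) (A : Set (Pt d)) (x : Pt d) : 0 ≤ esc d A x := by
  unfold esc
  split_ifs
  · exact Real.iInf_nonneg fun T => prob_nonneg _ _ _
  · exact le_rfl

lemma esc_pos (d : ℕ) (hd : 5 ≤ d) (A : Set (Pt d)) (hfin : A.Finite) (hup : Up d A)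
    (x : Pt d) (hx : x ∈ A) : 0 < esc d A x := by
  obtain ⟨c, hc, hT⟩ := Esc_all d hd A hfin hup x
  unfold esc
  rw [if_pos hx]
  exact lt_of_lt_of_le hc (le_ciInf hT)

lemma capa_nonneg (d : ℕ) (A : Set (Pt d)) : 0 ≤ capa d A :=
  tsum_nonneg fun _ => esc_nonneg _ _ _

lemma capa_pos (d : ℕ) (hd : 5 ≤ d) (A : Set (Pt d)) (hfin : A.Finite) (hup : Up d A)
    (x : Pt d) (hx : x ∈ A) : 0 < capa d A := by
  have : Finite A := hfin
  exact Summable.tsum_pos (Summable.of_finite) (fun _ => esc_nonneg _ _ _) ⟨x, hx⟩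
    (esc_pos d hd A hfin hup x hx)

/-- First hitting probability at time `t`. -/
noncomputable def fh (d : ℕ) (W : Set (Pt d)) (x : Pt d) (t : ℕ) : ℝ :=
  prob d t (fun s => 1 ≤ t ∧ wpos d x s t ∈ W ∧ ∀ u, 1 ≤ u → u < t → wpos d x s u ∉ W)

/-- First hitting probability at time `t`, coming from `y`. -/
noncomputable def fhy (d : ℕ) (W : Set (Pt d)) (y x : Pt d) (t : ℕ) : ℝ :=
  prob d t (fun s => 1 ≤ t ∧ wpos d x s t ∈ W ∧ wpos d x s (t - 1) = y ∧
    ∀ u, 1 ≤ u → u < t → wpos d x s u ∉ W)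

lemma fh_zero (d : ℕ) (W : Set (Pt d)) (x : Pt d) : fh d W x 0 = 0 :=
  prob_false d 0 (fun s h => by omega)

lemma fh_nonneg (d : ℕ) (W : Set (Pt d)) (x : Pt d) (t : ℕ) : 0 ≤ fh d W x t :=
  prob_nonneg _ _ _

lemma prob_le_one (d : ℕ) (hd : 0 < d) (T : ℕ) (P : (Fin T → Pt d) → Prop) :
    prob d T P ≤ 1 := by
  induction T with
  | zero =>
    rw [← prob_zero d (P := fun _ => True) (fun _ => trivial)]
    exact prob_mono d 0 (fun _ _ => trivial)
  | succ T ih =>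
    have hpos : (0 : ℝ) < ((2 * d : ℕ) : ℝ) := by
      have : 0 < 2 * d := by omega
      exact_mod_cast this
    rw [prob_succ, div_le_one hpos, ← card_dirs]
    exact Finset.sum_le_sum fun p _ => ih _

open Classical in
lemma fh_sum (d : ℕ) (hd : 0 < d) (W : Set (Pt d)) (N : ℕ) :
    ∀ x, ∑ t ∈ Finset.range N, fh d W x (t + 1) ≤ 1 := by
  have hpos : (0 : ℝ) < ((2 * d : ℕ) : ℝ) := by
    have : 0 < 2 * d := by omega
    exact_mod_cast this
  induction N with
  | zero => intro x; simp
  | succ N ih =>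
    intro x
    rw [Finset.sum_range_succ']
    have h1 : fh d W x (0 + 1) ≤
        (∑ p : Fin d × Bool, if x + dv d p ∈ W then (1 : ℝ) else 0) / ((2 * d : ℕ) : ℝ) := by
      unfold fh
      rw [prob_succ]
      gcongr with p
      split_ifs with h
      · exact prob_le_one d hd _ _
      · refine le_of_eq (prob_false _ _ ?_)
        rintro s ⟨-, hs, -⟩
        rw [wpos_cons, wpos_zero] at hs
        exact h hs
    have h2 : ∀ t, fh d W x (t + 1 + 1) ≤
        (∑ p : Fin d × Bool, if x + dv d p ∈ W then 0 else fh d W (x + dv d p) (t + 1))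
          / ((2 * d : ℕ) : ℝ) := by
      intro t
      unfold fh
      rw [prob_succ]
      gcongr with p
      split_ifs with h
      · refine le_of_eq (prob_false _ _ ?_)
        rintro s ⟨-, -, hs⟩
        apply hs 1 le_rfl (by omega)
        rw [wpos_cons d x (dv d p) s 0, wpos_zero]
        exact h
      · refine prob_mono _ _ ?_
        rintro s ⟨-, h1, h2⟩
        refine ⟨by omega, by rwa [wpos_cons] at h1, fun u hu1 hu2 => ?_⟩
        have := h2 (u + 1) (by omega) (by omega)
        rwa [wpos_cons] at this
    refine (add_le_add (Finset.sum_le_sum fun t _ => h2 t) h1).trans ?_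
    rw [← Finset.sum_div, ← add_div, div_le_one hpos, Finset.sum_comm, ← Finset.sum_add_distrib,
      ← card_dirs]
    refine Finset.sum_le_sum fun p _ => ?_
    split_ifs with h
    · simp
    · simpa using ih (x + dv d p)

lemma fh_summable (d : ℕ) (hd : 0 < d) (W : Set (Pt d)) (x : Pt d) :
    Summable (fh d W x) := by
  rw [← summable_nat_add_iff 1]
  exact summable_of_sum_range_le (fun t => fh_nonneg _ _ _ _) (fun N => fh_sum d hd W N x)

lemma fhy_le (d : ℕ) (W : Set (Pt d)) (y x : Pt d) (t : ℕ) : fhy d W y x t ≤ fh d W x t :=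
  prob_mono _ _ (fun _ h => ⟨h.1, h.2.1, h.2.2.2⟩)

lemma fhy_nonneg (d : ℕ) (W : Set (Pt d)) (y x : Pt d) (t : ℕ) : 0 ≤ fhy d W y x t :=
  prob_nonneg _ _ _

lemma fhy_summable (d : ℕ) (hd : 0 < d) (W : Set (Pt d)) (y x : Pt d) :
    Summable (fhy d W y x) :=
  Summable.of_nonneg_of_le (fhy_nonneg d W y x) (fhy_le d W y x) (fh_summable d hd W x)

lemma transP_pos_iff (d : ℕ) (hd : 0 < d) (W : Set (Pt d)) (x y : Pt d) :
    0 < transP d W x y ↔ ∃ t, 0 < fhy d W y x t := by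
  have e1 : hitFrom d W x y = ∑' t, fhy d W y x t := rfl
  have e2 : retProb d W x = ∑' t, fh d W x t := rfl
  constructor
  · intro h
    by_contra hne
    push Not at hne
    have : hitFrom d W x y = 0 := by
      rw [e1]
      have : fhy d W y x = fun _ => 0 :=
        funext fun t => le_antisymm (hne t) (fhy_nonneg _ _ _ _ _)
      rw [this]; simp
    unfold transP at h
    rw [this] at h
    simp at h
  · rintro ⟨t, ht⟩
    have h1 : 0 < hitFrom d W x y := by
      rw [e1]
      exact (fhy_summable d hd W y x).tsum_pos (fhy_nonneg d W y x) t ht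
    have h2 : hitFrom d W x y ≤ retProb d W x := by
      rw [e1, e2]
      exact (fhy_summable d hd W y x).tsum_le_tsum (fhy_le d W y x) (fh_summable d hd W x)
    exact div_pos h1 (h1.trans_le h2)

/-- Paths from `x` to `y` whose points other than the first one avoid `W`. -/
def Reach (d : ℕ) (W : Set (Pt d)) : Pt d → Pt d → Prop :=
  Relation.ReflTransGen (fun z w => w ∉ W ∧ ∃ p, w = z + dv d p)

lemma prob_pos_of_succ (d T : ℕ) (P : (Fin (T + 1) → Pt d) → Prop) (p : Fin d × Bool)
    (h : 0 < prob d T (fun s => P (Fin.cons (dv d p) s))) : 0 < prob d (T + 1) P := by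
  have hd : 0 < d := p.1.pos
  rw [prob_succ]
  refine div_pos ?_ (by have : 0 < 2 * d := by omega
                        exact_mod_cast this)
  exact h.trans_le (Finset.single_le_sum (s := Finset.univ)
    (f := fun p : Fin d × Bool => prob d T (fun s => P (Fin.cons (dv d p) s)))
    (fun q _ => prob_nonneg _ _ _) (Finset.mem_univ p))

lemma fhy_pos_of_reach (d : ℕ) (W : Set (Pt d)) (x y : Pt d) (p : Fin d × Bool)
    (hp : y + dv d p ∈ W) (h : Reach d W x y) : ∃ t, 0 < fhy d W y x (t + 1) := by
  induction h using Relation.ReflTransGen.head_induction_on with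
  | refl =>
    refine ⟨0, prob_pos_of_succ d 0 _ p ?_⟩
    rw [prob_zero]
    · exact one_pos
    · intro s
      refine ⟨le_rfl, ?_, ?_, fun u h1 h2 => by omega⟩
      · rw [wpos_cons, wpos_zero]; exact hp
      · exact wpos_zero _ _ _
  | head hstep _ ih =>
    obtain ⟨hw, q, rfl⟩ := hstep
    obtain ⟨t, ht⟩ := ih
    refine ⟨t + 1, prob_pos_of_succ d _ _ q (ht.trans_le (prob_mono _ _ ?_))⟩
    rintro s ⟨-, h1, h2, h3⟩
    refine ⟨by omega, by rwa [wpos_cons], ?_, fun u hu1 hu2 => ?_⟩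
    · have : t + 1 + 1 - 1 = (t + 1 - 1) + 1 := by omega
      rw [this, wpos_cons]; exact h2
    · obtain ⟨v, rfl⟩ : ∃ v, u = v + 1 := ⟨u - 1, by omega⟩
      rw [wpos_cons]
      rcases Nat.eq_zero_or_pos v with rfl | hv
      · rw [wpos_zero]; exact hw
      · exact h3 v hv (by omega)

lemma wpos_succ (d : ℕ) (x : Pt d) {T : ℕ} (s : Fin T → Pt d) (t : ℕ) (ht : t < T) :
    wpos d x s (t + 1) = wpos d x s t + s ⟨t, ht⟩ := by
  unfold wpos
  rw [add_assoc]
  congr 1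
  have : Finset.univ.filter (fun i : Fin T => (i : ℕ) < t + 1) =
      insert ⟨t, ht⟩ (Finset.univ.filter (fun i : Fin T => (i : ℕ) < t)) := by
    ext i
    simp [Fin.ext_iff]
    omega
  rw [this, Finset.sum_insert (by simp), add_comm]

lemma adj_of_fhy_pos (d : ℕ) (W : Set (Pt d)) (x y : Pt d) (t : ℕ) (h : 0 < fhy d W y x t) :
    ∃ p, y + dv d p ∈ W := by
  by_contra hne
  push Not at hne
  refine h.ne' ?_
  unfold fhy prob
  rw [div_eq_zero_iff]
  left
  rw [Nat.cast_eq_zero, Nat.card_eq_zero]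
  left
  refine ⟨?_⟩
  rintro ⟨s, hs, h1, h2, h3, -⟩
  obtain ⟨u, rfl⟩ : ∃ u, t = u + 1 := ⟨t - 1, by omega⟩
  rw [wpos_succ d x s u (by omega)] at h2
  simp only [Nat.add_sub_cancel] at h3
  rw [h3] at h2
  obtain ⟨p, hp⟩ := (mem_Dir_iff d _).1 (hs ⟨u, by omega⟩)
  rw [← hp] at h2
  exact hne p h2

lemma dv_neg (d : ℕ) (i : Fin d) (b : Bool) : dv d (i, !b) = - dv d (i, b) := by
  cases b <;> simp [dv, Pi.single_neg]

lemma Reach_rev (d : ℕ) (W : Set (Pt d)) (x y : Pt d) (hx : x ∉ W) (h : Reach d W x y) :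
    y ∉ W ∧ Reach d W y x := by
  induction h with
  | refl => exact ⟨hx, Relation.ReflTransGen.refl⟩
  | tail _ hstep ih =>
    obtain ⟨hw, ⟨i, b⟩, rfl⟩ := hstep
    refine ⟨hw, Relation.ReflTransGen.head ⟨ih.1, (i, !b), ?_⟩ ih.2⟩
    rw [dv_neg]; abel

lemma Reach_up (d : ℕ) (W : Set (Pt d)) (hup : Up d W) (M : ℤ) :
    ∀ m : ℕ, ∀ x, M - csum d x ≤ m → ∃ x', Reach d W x x' ∧ M ≤ csum d x' := by
  intro m
  induction m with
  | zero => intro x hx; exact ⟨x, Relation.ReflTransGen.refl, by simpa using hx⟩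
  | succ m ih =>
    intro x hx
    obtain ⟨i, hi⟩ := hup x
    obtain ⟨x', h1, h2⟩ := ih (x + dv d (i, true)) (by rw [csum_up]; push_cast at hx; linarith)
    exact ⟨x', Relation.ReflTransGen.head ⟨hi, _, rfl⟩ h1, h2⟩

lemma Reach_mono (d : ℕ) (W : Set (Pt d)) (M : ℤ) (hM : ∀ z ∈ W, csum d z < M) (w : Pt d) :
    ∀ m : ℕ, ∀ x, csum d w - csum d x ≤ m → M ≤ csum d x → x ≤ w → Reach d W x w := by
  intro m
  induction m with
  | zero =>
    intro x hx _ hle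
    have : x = w := by
      funext i
      have h1 : csum d x = csum d w :=
        le_antisymm (Finset.sum_le_sum fun j _ => hle j) (by simpa using hx)
      exact (Finset.sum_eq_sum_iff_of_le (fun j _ => hle j)).1 h1 i (Finset.mem_univ i)
    rw [this]; exact Relation.ReflTransGen.refl
  | succ m ih =>
    intro x hx hMx hle
    by_cases he : x = w
    · rw [he]; exact Relation.ReflTransGen.refl
    · obtain ⟨i, hi⟩ : ∃ i, x i ≠ w i := by
        by_contra hne
        push Not at hne
        exact he (funext hne)
      have hlt : x i < w i := lt_of_le_of_ne (hle i) hi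
      have hc := csum_up d x i
      refine Relation.ReflTransGen.head ⟨fun hW => ?_, (i, true), rfl⟩
        (ih (x + dv d (i, true)) (by rw [hc]; push_cast at hx; linarith) (by linarith) ?_)
      · have := hM _ hW
        linarith
      · intro j
        by_cases hj : j = i
        · subst hj
          simp [dv]; omega
        · simpa [dv, hj] using hle j

lemma Reach_all (d : ℕ) (W : Set (Pt d)) (hfin : W.Finite) (hup : Up d W) (x y : Pt d)
    (hy : y ∉ W) : Reach d W x y := by
  obtain ⟨M, hM⟩ : ∃ M : ℤ, ∀ z ∈ W, csum d z < M := by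
    obtain ⟨M, hM⟩ := (hfin.image (csum d)).bddAbove
    exact ⟨M + 1, fun z hz => Int.lt_add_one_of_le (hM ⟨z, hz, rfl⟩)⟩
  obtain ⟨x', hx1, hx2⟩ := Reach_up d W hup M _ x (Int.self_le_toNat _)
  obtain ⟨y', hy1, hy2⟩ := Reach_up d W hup M _ y (Int.self_le_toNat _)
  have h1 := Reach_mono d W M hM (x' ⊔ y') _ x' (Int.self_le_toNat _) hx2 le_sup_left
  have h2 := Reach_mono d W M hM (x' ⊔ y') _ y' (Int.self_le_toNat _) hy2 le_sup_right
  exact (hx1.trans h1).trans (Reach_rev d W y _ hy (hy1.trans h2)).2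

lemma transP_pos_iff_adj (d : ℕ) (hd : 0 < d) (W : Set (Pt d)) (hfin : W.Finite) (hup : Up d W)
    (x y : Pt d) (hy : y ∉ W) : 0 < transP d W x y ↔ ∃ p, y + dv d p ∈ W := by
  rw [transP_pos_iff d hd]
  constructor
  · rintro ⟨t, ht⟩; exact adj_of_fhy_pos d W x y t ht
  · rintro ⟨p, hp⟩
    obtain ⟨t, ht⟩ := fhy_pos_of_reach d W x y p hp (Reach_all d W hfin hup x y hy)
    exact ⟨t + 1, ht⟩

lemma dist0_le (d : ℕ) (p q : Pt d) (h : ∀ i, |p i - q i| ≤ 1) : dist0 d p q ≤ d := by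
  unfold dist0
  rw [Real.sqrt_le_left (by positivity)]
  calc ∑ i, ((p i : ℝ) - q i) ^ 2 ≤ ∑ _i : Fin d, (1 : ℝ) := by
        refine Finset.sum_le_sum fun i _ => ?_
        have h1 : (p i - q i) ^ 2 ≤ 1 := (sq_le_one_iff_abs_le_one _).2 (h i)
        exact_mod_cast h1
    _ = (d : ℝ) := by simp
    _ ≤ (d : ℝ) ^ 2 := by
        have : d ≤ d ^ 2 := Nat.le_self_pow (by norm_num) d
        exact_mod_cast this

lemma sep_le (d : ℕ) {k : ℕ} (C : Fin k → Finset (Pt d)) (i j : Fin k) (hij : j ≠ i)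
    (p q : Pt d) (hp : p ∈ C i) (hq : q ∈ C j) : sep d C ≤ dist0 d p q := by
  unfold sep
  refine (ciInf_le (Set.finite_range _).bddBelow i).trans ?_
  refine csInf_le ⟨0, ?_⟩ ⟨p, hp, q, ?_, rfl⟩
  · rintro r ⟨x, _, y, _, rfl⟩
    exact Real.sqrt_nonneg _
  · unfold others
    rw [Finset.mem_biUnion]
    exact ⟨j, Finset.mem_univ _, by rw [if_neg hij]; exact hq⟩

lemma same_cluster (d : ℕ) {k : ℕ} (C : Fin k → Finset (Pt d)) (a : ℝ) (hda : (d : ℝ) < a)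
    (hs : a ≤ sep d C) (i j : Fin k) (p q : Pt d) (hp : p ∈ C i) (hq : q ∈ C j)
    (h : ∀ l, |p l - q l| ≤ 1) : j = i := by
  by_contra hne
  have := sep_le d C i j hne p q hp hq
  have := dist0_le d p q h
  linarith

lemma Up_conf (d : ℕ) (hd : 5 ≤ d) (a b : ℝ) (hda : (d : ℝ) < a) (E : ClusteringS d)
    (hdot : IsDOT d E.2 a b) : Up d (↑(confOf d E)) := by
  intro z
  by_contra hne
  push Not at hne
  have hmem : ∀ i : Fin d, ∃ j, z + dv d (i, true) ∈ E.2 j := by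
    intro i
    have := hne i
    simpa [confOf] using this
  choose f hf using hmem
  let i0 : Fin d := ⟨0, by omega⟩
  have hsame : ∀ i, f i = f i0 := by
    intro i
    refine same_cluster d E.2 a hda hdot.2.1 _ _ _ _ (hf i0) (hf i) fun l => ?_
    simp only [dv, Pi.add_apply, if_true, Pi.single_apply]
    split_ifs <;> simp
  have hsub : Finset.univ.image (fun i : Fin d => z + dv d (i, true)) ⊆ E.2 (f i0) := by
    intro w hw
    obtain ⟨i, -, rfl⟩ := Finset.mem_image.1 hw
    rw [← hsame i]; exact hf i
  have hcard := Finset.card_le_card hsub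
  rw [Finset.card_image_of_injective, Finset.card_univ, Fintype.card_fin] at hcard
  · rcases hdot.1 (f i0) with h | h <;> omega
  · intro i j hij
    have := dv_inj d (add_left_cancel hij)
    exact (Prod.ext_iff.1 this).1

lemma Up_mono (d : ℕ) {A B : Set (Pt d)} (h : A ⊆ B) (hB : Up d B) : Up d A := fun z => by
  obtain ⟨i, hi⟩ := hB z
  exact ⟨i, fun hA => hi (h hA)⟩

lemma cluster_sub (d : ℕ) (E : ClusteringS d) (i : Fin E.1) : E.2 i ⊆ confOf d E :=
  Finset.subset_biUnion_of_mem E.2 (Finset.mem_univ i)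

lemma core (d n : ℕ) (hd : 5 ≤ d) (a b : ℝ) (hda : (d : ℝ) < a)
    (E0 : ClusteringS d) (hE0 : IsClusteringConf d n E0) (hE0dot : IsDOT d E0.2 a b)
    (i : Fin E0.1) (x y : Pt d) (hx : x ∈ E0.2 i)
    (hE1 : IsClusteringConf d n (updC d E0 i x y)) (hE1dot : IsDOT d (updC d E0 i x y).2 a b) :
    0 < pHAT d (confOf d E0) x y ↔ 0 < qIHAT d E0 i x y := by
  have hUp := Up_conf d hd a b hda E0 hE0dot
  have hsub := cluster_sub d E0
  have hxU : x ∈ confOf d E0 := hsub i hx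
  have hUpc : ∀ j, Up d (↑(E0.2 j) : Set (Pt d)) := fun j =>
    Up_mono d (Finset.coe_subset.2 (hsub j)) hUp
  have hharm : 0 < harm d (↑(confOf d E0)) x :=
    div_pos (esc_pos d hd _ (Finset.finite_toSet _) hUp x hxU)
      (capa_pos d hd _ (Finset.finite_toSet _) hUp x hxU)
  have hharmS : 0 < harmS d E0 i x := by
    refine div_pos (esc_pos d hd _ (Finset.finite_toSet _) (hUpc i) x hx) ?_
    exact Finset.sum_pos' (fun j _ => capa_nonneg _ _)
      ⟨i, Finset.mem_univ _, capa_pos d hd _ (Finset.finite_toSet _) (hUpc i) x hx⟩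
  have hyi : y ∈ (updC d E0 i x y).2 i := by
    simp [updC]
  have hne_cl : ∀ j, j ≠ i → (updC d E0 i x y).2 j = E0.2 j := by
    intro j hj
    simp [updC, Function.update_of_ne hj]
  have hyU : y ∉ (↑(confOf d E0) : Set (Pt d)) \ {x} := by
    rintro ⟨hy, hyx⟩
    obtain ⟨j, -, hj⟩ := Finset.mem_biUnion.1 hy
    by_cases hji : j = i
    · subst hji
      have hyx' : y ≠ x := hyx
      have h1 : confOf d (updC d E0 j x y) ⊆ (confOf d E0).erase x := by
        intro w hw
        obtain ⟨l, hl⟩ : ∃ l : Fin E0.1, w ∈ (updC d E0 j x y).2 l := by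
          obtain ⟨l, -, hl⟩ := Finset.mem_biUnion.1 hw
          exact ⟨l, hl⟩
        by_cases hlj : l = j
        · subst hlj
          have hl' : w ∈ insert y ((E0.2 l).erase x) := by simpa [updC] using hl
          rcases Finset.mem_insert.1 hl' with rfl | hw'
          · exact Finset.mem_erase.2 ⟨hyx', hy⟩
          · exact Finset.erase_subset_erase _ (hsub l) hw'
        · rw [hne_cl l hlj] at hl
          refine Finset.mem_erase.2 ⟨?_, hsub l hl⟩
          rintro rfl
          exact Finset.disjoint_left.1 (hE0.2.1 l j hlj) hl hx
      have h2 := Finset.card_le_card h1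
      rw [Finset.card_erase_of_mem hxU, hE0.2.2, hE1.2.2] at h2
      have h3 : 0 < (confOf d E0).card := Finset.card_pos.2 ⟨x, hxU⟩
      rw [hE0.2.2] at h3
      omega
    · have hj' := hj
      rw [← hne_cl j hji] at hj'
      exact Finset.disjoint_left.1 (hE1.2.1 j i hji) hj' hyi
  have hyC : y ∉ (↑(E0.2 i) : Set (Pt d)) \ {x} := fun h => hyU ⟨hsub i h.1, h.2⟩
  unfold pHAT qIHAT
  rw [mul_pos_iff_of_pos_left hharm, mul_pos_iff_of_pos_left hharmS,
    transP_pos_iff_adj d (by omega) _ ((Finset.finite_toSet _).sdiff)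
      (Up_mono d Set.sdiff_subset hUp) x y hyU,
    transP_pos_iff_adj d (by omega) _ ((Finset.finite_toSet _).sdiff)
      (Up_mono d Set.sdiff_subset (hUpc i)) x y hyC]
  constructor
  · rintro ⟨p, hp, hpx⟩
    refine ⟨p, ?_, hpx⟩
    obtain ⟨j, -, hj⟩ := Finset.mem_biUnion.1 hp
    by_cases hji : j = i
    · subst hji; exact hj
    · exfalso
      have hj' := hj
      rw [← hne_cl j hji] at hj'
      refine hji (same_cluster d (updC d E0 i x y).2 a hda hE1dot.2.1 i j y _ hyi hj' fun l => ?_)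
      simp only [dv, Pi.add_apply, Pi.single_apply]
      split_ifs <;> simp
  · rintro ⟨p, hp, hpx⟩
    exact ⟨p, hsub i hp, hpx⟩

lemma mem_of_q_pos (d : ℕ) (E0 : ClusteringS d) (i : Fin E0.1) (x y : Pt d)
    (h : 0 < qIHAT d E0 i x y) : x ∈ E0.2 i := by
  by_contra hx
  have : esc d (↑(E0.2 i)) x = 0 := by
    unfold esc; rw [if_neg (by simpa using hx)]
  unfold qIHAT harmS at h
  rw [this] at h
  simp at h

/-- **Correspondence between `Pairs` and `Triples`.** For `(a,b)` separated DOT clusterings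
`E0, E1` of `n`-element configurations in `ℤ^d`, `d ≥ 5`, `n ≥ 4`, if
`a ≥ e^{max{100b, 10d²}}` then `Pairs(E0,E1)` and `Triples(E0,E1)` correspond via
`(x,y) ↔ (clust(E0,x), x, y)`. -/
theorem pairs_triples (d n : ℕ) (hd : 5 ≤ d) (hn : 4 ≤ n) (a b : ℝ)
    (ha1 : 1 < a) (hb : 1 < b)
    (ha : Real.exp (max (100 * b) (10 * (d : ℝ) ^ 2)) ≤ a)
    (E0 E1 : ClusteringS d)
    (hE0 : IsClusteringConf d n E0) (hE0dot : IsDOT d E0.2 a b)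
    (hE1 : IsClusteringConf d n E1) (hE1dot : IsDOT d E1.2 a b) :
    Pairs d E0 E1 =
      {p : Pt d × Pt d | ∃ i : Fin E0.1, p.1 ∈ E0.2 i ∧
        (⟨i, p.1, p.2⟩ : Fin E0.1 × Pt d × Pt d) ∈ Triples d E0 E1} ∧
    Triples d E0 E1 =
      {q : Fin E0.1 × Pt d × Pt d | q.2.1 ∈ E0.2 q.1 ∧
        (q.2.1, q.2.2) ∈ Pairs d E0 E1} := by
  have hda : (d : ℝ) < a := by
    have h1 : 10 * (d : ℝ) ^ 2 + 1 ≤ Real.exp (10 * (d : ℝ) ^ 2) := Real.add_one_le_exp _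
    have h2 : Real.exp (10 * (d : ℝ) ^ 2) ≤ Real.exp (max (100 * b) (10 * (d : ℝ) ^ 2)) :=
      Real.exp_le_exp.2 (le_max_right _ _)
    have h3 : (5 : ℝ) ≤ d := by exact_mod_cast hd
    nlinarith
  have hcore : ∀ (i : Fin E0.1) (x y : Pt d), x ∈ E0.2 i → E1 = updC d E0 i x y →
      (0 < pHAT d (confOf d E0) x y ↔ 0 < qIHAT d E0 i x y) := by
    intro i x y hx hE
    subst hE
    exact core d n hd a b hda E0 hE0 hE0dot i x y hx hE1 hE1dot
  constructor
  · ext ⟨x, y⟩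
    constructor
    · rintro ⟨hp, i, hx, hE⟩
      exact ⟨i, hx, (hcore i x y hx hE).1 hp, hE⟩
    · rintro ⟨i, hx, hq, hE⟩
      exact ⟨(hcore i x y hx hE).2 hq, i, hx, hE⟩
  · ext ⟨i, x, y⟩
    constructor
    · rintro ⟨hq, hE⟩
      have hx : x ∈ E0.2 i := mem_of_q_pos d E0 i x y hq
      exact ⟨hx, (hcore i x y hx hE).2 hq, i, hx, hE⟩
    · rintro ⟨hx, hp, j, hj, hE⟩
      have hij : j = i := by
        by_contra hne
        exact Finset.disjoint_left.1 (hE0.2.1 j i hne) hj hx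
      subst hij
      exact ⟨(hcore j x y hx hE).1 hp, hE⟩


end HATFormal
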